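/- Let M be a popular max-matching in G and let U be the set of nodes unmatched in M. Let U_A = U ∩ A, U_B = U ∩ B, A' = A ∖ U, B' = B ∖ U, n0 = |A'| = |B'|, and let E' be the set of edges of E with both endpoints matched in M; for T ⊆ A ∪ B let Nbr(T) denote the set of neighbors in G of nodes in T (note Nbr(U_B) ⊆ A' and Nbr(U_A) ⊆ B' since M is maximum). Then there exists α : A' ∪ B' → ℤ such that: (a) α_a + α_b ≥ wt_M(a,b) for every edge (a,b) ∈ E'; (b) α_a + α_b = 0 for every edge (a,b) ∈ M; (c) α_a ∈ {0, −2, …, −2(n0−1)} for every a ∈ A' and α_b ∈ {0, 2, …, 2(n0−1)} for every b ∈ B'; (i) α_a = 0 for every a ∈ Nbr(U_B); and (ii) α_b = 2(n0−1) for every b ∈ Nbr(U_A). -/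

import Mathlib

open Classical

noncomputable section

namespace PopMax

/-- A bipartite preference instance `G = (A ∪ B, E)`:
`E a b` says there is an edge between `a ∈ A` and `b ∈ B`;
`prefA a b b'` says `a` strictly prefers `b` to `b'`;
`prefB b a a'` says `b` strictly prefers `a` to `a'`. -/
structure PrefSys (A : Type*) (B : Type*) where
  E : A → B → Prop
  prefA : A → B → B → Prop
  prefB : B → A → A → Prop

/-- Every node has a strict (linear) preference order over its neighbors. -/
def PrefSys.IsValid {A B : Type*} (I : PrefSys A B) : Prop :=
  (∀ a b, ¬ I.prefA a b b) ∧
  (∀ a b₁ b₂ b₃, I.prefA a b₁ b₂ → I.prefA a b₂ b₃ → I.prefA a b₁ b₃) ∧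
  (∀ a b₁ b₂, I.E a b₁ → I.E a b₂ → b₁ ≠ b₂ → I.prefA a b₁ b₂ ∨ I.prefA a b₂ b₁) ∧
  (∀ b a, ¬ I.prefB b a a) ∧
  (∀ b a₁ a₂ a₃, I.prefB b a₁ a₂ → I.prefB b a₂ a₃ → I.prefB b a₁ a₃) ∧
  (∀ b a₁ a₂, I.E a₁ b → I.E a₂ b → a₁ ≠ a₂ → I.prefB b a₁ a₂ ∨ I.prefB b a₂ a₁)

variable {A B : Type*}

/-- A matching: a set of pairwise disjoint edges. -/
def IsMatching (I : PrefSys A B) (M : Finset (A × B)) : Prop :=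
  (∀ p ∈ M, I.E p.1 p.2) ∧
  (∀ p ∈ M, ∀ q ∈ M, p.1 = q.1 → p = q) ∧
  (∀ p ∈ M, ∀ q ∈ M, p.2 = q.2 → p = q)

def matchedA (M : Finset (A × B)) (a : A) : Prop := ∃ b, (a, b) ∈ M
def matchedB (M : Finset (A × B)) (b : B) : Prop := ∃ a, (a, b) ∈ M

/-- A maximum matching: a matching of maximum cardinality. -/
def IsMaximumMatching (I : PrefSys A B) (M : Finset (A × B)) : Prop :=
  IsMatching I M ∧ ∀ N : Finset (A × B), IsMatching I N → N.card ≤ M.card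

/-- A perfect matching matches all nodes. -/
def IsPerfectMatching (I : PrefSys A B) (M : Finset (A × B)) : Prop :=
  IsMatching I M ∧ (∀ a, matchedA M a) ∧ (∀ b, matchedB M b)

/-- `a ∈ A` prefers matching `M` to matching `N`. -/
def prefersA (I : PrefSys A B) (a : A) (M N : Finset (A × B)) : Prop :=
  ∃ b, (a, b) ∈ M ∧ (¬ matchedA N a ∨ ∃ b', (a, b') ∈ N ∧ I.prefA a b b')

/-- `b ∈ B` prefers matching `M` to matching `N`. -/
def prefersB (I : PrefSys A B) (b : B) (M N : Finset (A × B)) : Prop :=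
  ∃ a, (a, b) ∈ M ∧ (¬ matchedB N b ∨ ∃ a', (a', b) ∈ N ∧ I.prefB b a a')

/-- A node `u ∈ A ∪ B` prefers matching `M` to matching `N`. -/
def prefers (I : PrefSys A B) (u : A ⊕ B) (M N : Finset (A × B)) : Prop :=
  match u with
  | Sum.inl a => prefersA I a M N
  | Sum.inr b => prefersB I b M N

/-- `φ(M,N)`: the number of nodes preferring `M` to `N`. -/
def phi [Fintype A] [Fintype B] (I : PrefSys A B) (M N : Finset (A × B)) : ℕ :=
  (Finset.univ.filter (fun u : A ⊕ B => prefers I u M N)).card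

/-- `Δ(M,N) = φ(M,N) − φ(N,M)`. -/
def Delta [Fintype A] [Fintype B] (I : PrefSys A B) (M N : Finset (A × B)) : ℤ :=
  (phi I M N : ℤ) - (phi I N M : ℤ)

/-- A popular max-matching: a maximum matching `M` with `Δ(M,N) ≥ 0`
for every maximum matching `N`. -/
def IsPopularMaxMatching [Fintype A] [Fintype B] (I : PrefSys A B)
    (M : Finset (A × B)) : Prop :=
  IsMaximumMatching I M ∧
    ∀ N : Finset (A × B), IsMaximumMatching I N → 0 ≤ Delta I M N

/-- The edge `(a,b) ∉ M` blocks `M`. -/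
def Blocks (I : PrefSys A B) (M : Finset (A × B)) (a : A) (b : B) : Prop :=
  I.E a b ∧ (a, b) ∉ M ∧
  (¬ matchedA M a ∨ ∃ b', (a, b') ∈ M ∧ I.prefA a b b') ∧
  (¬ matchedB M b ∨ ∃ a', (a', b) ∈ M ∧ I.prefB b a a')

/-- A stable matching: a matching with no blocking edge. -/
def IsStable (I : PrefSys A B) (S : Finset (A × B)) : Prop :=
  IsMatching I S ∧ ∀ a b, ¬ Blocks I S a b

/-- The edge weight `wt_M(a,b) ∈ {0, ±2}`. -/
def wt (I : PrefSys A B) (M : Finset (A × B)) (a : A) (b : B) : ℤ :=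
  if Blocks I M a b then 2
  else if (∃ b', (a, b') ∈ M ∧ I.prefA a b' b) ∧ (∃ a', (a', b) ∈ M ∧ I.prefB b a' a) then -2
  else 0

/-- The underlying simple graph on the node set `A ⊕ B`. -/
def graphOf (I : PrefSys A B) : SimpleGraph (A ⊕ B) :=
  SimpleGraph.fromRel (fun u w =>
    match u, w with
    | Sum.inl a, Sum.inr b => I.E a b
    | _, _ => False)

/-- The (undirected) edge `e` is an edge of the matching `M`. -/
def edgeInM (M : Finset (A × B)) (e : Sym2 (A ⊕ B)) : Prop :=
  ∃ a b, (a, b) ∈ M ∧ e = s(Sum.inl a, Sum.inr b)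

/-- Consecutive edges alternate between `M` and `E ∖ M`. -/
def altRel (M : Finset (A × B)) (e f : Sym2 (A ⊕ B)) : Prop :=
  edgeInM M e ↔ ¬ edgeInM M f

/-- An alternating path with respect to `M`. -/
def IsAltPath (I : PrefSys A B) (M : Finset (A × B)) {u w : A ⊕ B}
    (p : (graphOf I).Walk u w) : Prop :=
  p.IsPath ∧ List.Chain' (altRel M) p.edges

/-- An alternating cycle with respect to `M` (alternation also across the wrap-around). -/
def IsAltCycle (I : PrefSys A B) (M : Finset (A × B)) {w : A ⊕ B}
    (c : (graphOf I).Walk w w) : Prop :=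
  c.IsCycle ∧ List.Chain' (altRel M) (c.edges ++ c.edges.take 1)

/-- `wt_M` as a function on undirected edges. -/
def wtSym (I : PrefSys A B) (M : Finset (A × B)) : Sym2 (A ⊕ B) → ℤ :=
  Sym2.lift ⟨fun u w =>
      match u, w with
      | Sum.inl a, Sum.inr b => wt I M a b
      | Sum.inr b, Sum.inl a => wt I M a b
      | _, _ => 0,
    by rintro (a | b) (a' | b') <;> rfl⟩

/-- `wt_M(ρ) = Σ_{e ∈ ρ} wt_M(e)` for a walk `ρ`. -/
def wtWalk (I : PrefSys A B) (M : Finset (A × B)) {u w : A ⊕ B}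
    (p : (graphOf I).Walk u w) : ℤ :=
  (p.edges.map (wtSym I M)).sum

/-- The node `u ∈ A ∪ B` is unmatched in `M`. -/
def unmatchedNode (M : Finset (A × B)) : A ⊕ B → Prop
  | Sum.inl a => ¬ matchedA M a
  | Sum.inr b => ¬ matchedB M b

/-- The set of edges `(a,b) ∈ A × B` used by the walk `p`. -/
def pairsOf [Fintype A] [Fintype B] (I : PrefSys A B) {u w : A ⊕ B}
    (p : (graphOf I).Walk u w) : Finset (A × B) :=
  Finset.univ.filter (fun ab : A × B => s(Sum.inl ab.1, Sum.inr ab.2) ∈ p.edges)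

/-- `M` is Pareto-optimal: no matching `N` has `φ(N,M) > 0` and `φ(M,N) = 0`. -/
def IsParetoOptimal [Fintype A] [Fintype B] (I : PrefSys A B) (M : Finset (A × B)) : Prop :=
  ¬ ∃ N : Finset (A × B), IsMatching I N ∧ 0 < phi I N M ∧ phi I M N = 0

/-! ### The auxiliary instance `G*` -/

/-- `A* = {a_0, …, a_{n0−1} : a ∈ A}` where `n0 = |A|`. -/
abbrev AStar (A : Type*) [Fintype A] : Type _ := A × Fin (Fintype.card A)

/-- `B* = B̃ ∪ {d_1(a), …, d_{n0−1}(a) : a ∈ A}`; the dummy node `(a, j)`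
(with `j : Fin (n0 − 1)`) stands for `d_{j+1}(a)`. -/
abbrev BStar (A : Type*) (B : Type*) [Fintype A] : Type _ :=
  B ⊕ (A × Fin (Fintype.card A - 1))

/-- The auxiliary instance `G*` with its edges and preferences. -/
def starSys [Fintype A] (I : PrefSys A B) : PrefSys (AStar A) (BStar A B) where
  E := fun ai w =>
    match ai, w with
    | (a, _i), Sum.inl b => I.E a b
    | (a, i), Sum.inr (a', j) => a = a' ∧ ((i : ℕ) = (j : ℕ) ∨ (i : ℕ) = (j : ℕ) + 1)
  prefA := fun ai u v =>
    match ai, u, v with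
    | (a, _i), Sum.inl b, Sum.inl b' => I.prefA a b b'
    | (a, i), Sum.inl _b, Sum.inr (a', j) => a = a' ∧ (j : ℕ) = (i : ℕ)
    | (a, i), Sum.inr (a', j), Sum.inl _b => a = a' ∧ (j : ℕ) + 1 = (i : ℕ)
    | (a, i), Sum.inr (a', j), Sum.inr (a'', j') =>
        a = a' ∧ a = a'' ∧ (j : ℕ) + 1 = (i : ℕ) ∧ (j' : ℕ) = (i : ℕ)
  prefB := fun w x y =>
    match w, x, y with
    | Sum.inl b, (a, i), (a', i') =>
        (i' : ℕ) < (i : ℕ) ∨ ((i : ℕ) = (i' : ℕ) ∧ I.prefB b a a')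
    | Sum.inr (a, j), (a', i), (a'', i') =>
        a' = a ∧ a'' = a ∧ (i : ℕ) = (j : ℕ) ∧ (i' : ℕ) = (j : ℕ) + 1

/-- The projection `S ↦ S'`: delete edges incident to dummy nodes and replace
`(a_i, b̃)` by `(a, b)`. -/
def proj [Fintype A] [Fintype B] (S : Finset (AStar A × BStar A B)) : Finset (A × B) :=
  Finset.univ.filter (fun ab : A × B =>
    ∃ i : Fin (Fintype.card A), ((ab.1, i), (Sum.inl ab.2 : BStar A B)) ∈ S)

/-- `a ∈ A_i` for the level partition of `A` induced by a (stable) matching `S` in `G*`: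
for `i ≤ n0 − 2`, `a ∈ A_i` iff `(a_i, b̃) ∈ S` for some `b̃ ∈ B̃`;
`A_{n0−1}` consists of all remaining nodes of `A`. -/
def AtLevelA [Fintype A] (S : Finset (AStar A × BStar A B)) (a : A) (i : ℕ) : Prop :=
  (i + 1 < Fintype.card A ∧
     ∃ j : Fin (Fintype.card A), (j : ℕ) = i ∧
       ∃ b : B, ((a, j), (Sum.inl b : BStar A B)) ∈ S) ∨
  (i + 1 = Fintype.card A ∧
     ∀ j : Fin (Fintype.card A), (j : ℕ) + 1 < Fintype.card A →
       ∀ b : B, ((a, j), (Sum.inl b : BStar A B)) ∉ S)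

/-- `b ∈ B_i` for the level partition of `B` induced by a (stable) matching `S` in `G*`:
for `1 ≤ i ≤ n0 − 1`, `b ∈ B_i` iff `(a_i, b̃) ∈ S` for some `a ∈ A_i`;
`B_0` consists of all remaining nodes of `B`. -/
def AtLevelB [Fintype A] (S : Finset (AStar A × BStar A B)) (b : B) (i : ℕ) : Prop :=
  (1 ≤ i ∧ i < Fintype.card A ∧
     ∃ j : Fin (Fintype.card A), (j : ℕ) = i ∧
       ∃ a : A, AtLevelA S a i ∧ ((a, j), (Sum.inl b : BStar A B)) ∈ S) ∨
  (i = 0 ∧ ∀ j : Fin (Fintype.card A), 1 ≤ (j : ℕ) →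
       ∀ a : A, AtLevelA S a (j : ℕ) → ((a, j), (Sum.inl b : BStar A B)) ∉ S)

/-!
Contract the edges of `M` to the vertices of a digraph with an arc `u → v` for every edge of `G`
from the `A`-node of `u` to the `B`-node of `v`, of weight `wt_M / 2 ≤ 1`. Then `α` is twice a
potential `π` of this digraph on `A'` and `-2 π` on `B'`. With `π u` the maximum, over the simple
paths from `u`, of the weight plus a lower bound prescribed at the end, such a potential exists
between prescribed bounds as soon as no cycle has positive weight and every path satisfies the
inequality forced by the bounds at its ends.

A path together with an edge closing it up, or leaving it at either end for an unmatched node,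
describes an exchange that turns `M` into another maximum matching. The change in votes is the sum
of the edge weights, where the edge at an unmatched node contributes at least `-1`. Since `M` is
popular, cycles have nonpositive weight, and so, by parity, have paths that start next to `U_A` or
end next to `U_B`. A path that does both would be augmenting. All other paths have at most `n₀ - 1`
arcs, whence the range of `α`.
-/

/-! ### Potentials of weighted digraphs -/

section Potential

variable {V : Type*} {R : V → V → Prop} {w : V → V → ℤ}

/-- A simple path of the digraph `R`, encoded as the list of its vertices. The path `a :: l` starts
at `a` and ends at `l.getLastD a`. -/
def IsSimplePath (R : V → V → Prop) (l : List V) : Prop :=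
  l.IsChain R ∧ l.Nodup

/-- The total weight of the arcs between consecutive vertices of a list. -/
def pathWeight (w : V → V → ℤ) : List V → ℤ
  | u :: v :: l => w u v + pathWeight w (v :: l)
  | _ => 0

theorem isSimplePath_singleton (a : V) : IsSimplePath R [a] :=
  ⟨List.isChain_singleton a, List.nodup_singleton a⟩

theorem IsSimplePath.of_append_right {s t : List V} (h : IsSimplePath R (s ++ t)) :
    IsSimplePath R t :=
  ⟨h.1.right_of_append, h.2.of_append_right⟩

theorem IsSimplePath.of_cons {a : V} {l : List V} (h : IsSimplePath R (a :: l)) :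
    IsSimplePath R l :=
  of_append_right (s := [a]) h

theorem isChain_cons_append_cons {a c : V} {s t : List V} :
    (a :: s ++ c :: t).IsChain R ↔
      (a :: s).IsChain R ∧ R (s.getLastD a) c ∧ (c :: t).IsChain R := by
  induction s generalizing a with
  | nil => simp
  | cons b s ih =>
    rw [List.getLastD_cons, List.cons_append, List.cons_append, List.isChain_cons_cons,
      ← List.cons_append, ih, List.isChain_cons_cons, and_assoc]

theorem pathWeight_cons_append_cons (a c : V) (s t : List V) :
    pathWeight w (a :: s ++ c :: t) =
      pathWeight w (a :: s) + w (s.getLastD a) c + pathWeight w (c :: t) := by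
  induction s generalizing a with
  | nil => simp [pathWeight]
  | cons b s ih =>
    have := ih b
    simp only [List.cons_append, pathWeight, List.getLastD_cons] at this ⊢
    omega

theorem pathWeight_cons_le_length (hw : ∀ u v, w u v ≤ 1) (a : V) (l : List V) :
    pathWeight w (a :: l) ≤ l.length := by
  induction l generalizing a with
  | nil => simp [pathWeight]
  | cons b l ih =>
    have := ih b
    have := hw a b
    simp only [pathWeight, List.length_cons]
    omega

theorem IsSimplePath.pathWeight_le_card_sub_one [Fintype V] (hw : ∀ u v, w u v ≤ 1) {a : V}
    {l : List V} (h : IsSimplePath R (a :: l)) :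
    pathWeight w (a :: l) ≤ (Fintype.card V : ℤ) - 1 := by
  have hlength : l.length + 1 ≤ Fintype.card V := h.2.length_le_card
  have := pathWeight_cons_le_length hw a l
  omega

theorem IsSimplePath.exists_cons_of_rel {a b : V} {l : List V}
    (hcycle : ∀ a l, IsSimplePath R (a :: l) → R (l.getLastD a) a →
      pathWeight w (a :: l) + w (l.getLastD a) a ≤ 0)
    (hl : IsSimplePath R (b :: l)) (hab : R a b) :
    ∃ l', IsSimplePath R (a :: l') ∧ l'.getLastD a = l.getLastD b ∧
      w a b + pathWeight w (b :: l) ≤ pathWeight w (a :: l') := by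
  have hchain : (a :: b :: l).IsChain R := List.isChain_cons_cons.2 ⟨hab, hl.1⟩
  by_cases ha : a ∈ b :: l
  · obtain ⟨s, t, hst⟩ := List.append_of_mem ha
    have hlast : t.getLastD a = l.getLastD b := by
      simpa [List.getLast?_cons] using (congrArg List.getLast? hst).symm
    rw [hst] at hl hchain
    obtain ⟨hs, hclose, -⟩ := isChain_cons_append_cons.1 hchain
    have hnodup : (a :: s).Nodup := (List.nodup_middle.1 hl.2).sublist (by simp)
    have hsplit : w a b + pathWeight w (b :: l) = _ :=
      (congrArg (fun l => pathWeight w (a :: l)) hst).trans (pathWeight_cons_append_cons a a s t)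
    have := hcycle a s ⟨hs, hnodup⟩ hclose
    exact ⟨t, hl.of_append_right, hlast, by omega⟩
  · exact ⟨b :: l, ⟨hchain, List.nodup_cons.2 ⟨ha, hl.2⟩⟩, List.getLastD_cons, le_rfl⟩

theorem exists_potential_between {lo hi : V → ℤ}
    (hpath : ∀ a l, IsSimplePath R (a :: l) →
      pathWeight w (a :: l) + lo (l.getLastD a) ≤ hi a)
    (hcycle : ∀ a l, IsSimplePath R (a :: l) → R (l.getLastD a) a →
      pathWeight w (a :: l) + w (l.getLastD a) a ≤ 0) :
    ∃ π : V → ℤ, (∀ v, lo v ≤ π v) ∧ (∀ v, π v ≤ hi v) ∧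
      ∀ u v, R u v → w u v + π v ≤ π u := by
  let value (a : V) (l : {l // IsSimplePath R (a :: l)}) : ℤ :=
    pathWeight w (a :: l) + lo (l.1.getLastD a)
  have hnonempty (a : V) : Nonempty {l // IsSimplePath R (a :: l)} :=
    ⟨[], isSimplePath_singleton a⟩
  have hbdd (a : V) : BddAbove (Set.range (value a)) :=
    ⟨hi a, Set.forall_mem_range.2 fun l => hpath a l l.2⟩
  refine ⟨fun a => ⨆ l, value a l, fun a => ?_, fun a => ciSup_le fun l => hpath a l l.2,
    fun a b hab => ?_⟩
  · simpa [value, pathWeight] using le_ciSup (hbdd a) ⟨[], isSimplePath_singleton a⟩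
  · rw [add_ciSup (hbdd b)]
    refine ciSup_le fun ⟨l, hl⟩ => ?_
    obtain ⟨l', hl', hlast, hweight⟩ := hl.exists_cons_of_rel hcycle hab
    have := le_ciSup (hbdd a) ⟨l', hl'⟩
    simp only [value, hlast] at this ⊢
    omega

end Potential

/-! ### Votes -/

section Votes

/-- Every node has a tournament on its neighbors, possibly with cycles, as its preference relation:
any two distinct neighbors are comparable, in exactly one direction. -/
structure PrefSys.IsTournament (I : PrefSys A B) : Prop where
  asymmA : ∀ a b₁ b₂, I.E a b₁ → I.E a b₂ → I.prefA a b₁ b₂ → ¬ I.prefA a b₂ b₁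
  totalA : ∀ a b₁ b₂, I.E a b₁ → I.E a b₂ → b₁ ≠ b₂ → I.prefA a b₁ b₂ ∨ I.prefA a b₂ b₁
  asymmB : ∀ b a₁ a₂, I.E a₁ b → I.E a₂ b → I.prefB b a₁ a₂ → ¬ I.prefB b a₂ a₁
  totalB : ∀ b a₁ a₂, I.E a₁ b → I.E a₂ b → a₁ ≠ a₂ → I.prefB b a₁ a₂ ∨ I.prefB b a₂ a₁

theorem PrefSys.IsValid.isTournament {I : PrefSys A B} (hI : I.IsValid) : I.IsTournament := by
  obtain ⟨irreflA, transA, totalA, irreflB, transB, totalB⟩ := hI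
  exact ⟨fun a b₁ b₂ _ _ h h' => irreflA a b₁ (transA a b₁ b₂ b₁ h h'), totalA,
    fun b a₁ a₂ _ _ h h' => irreflB b a₁ (transB b a₁ a₂ a₁ h h'), totalB⟩

/-- The vote of a node with preference relation `r` and current partners `P` on switching to `c`:
`1` in favor, `-1` against, and `0` for a node that has no partner or is indifferent. -/
def vote {β : Type*} (r : β → β → Prop) (P : β → Prop) (c : β) : ℤ :=
  (if ∃ d, P d ∧ r c d then 1 else 0) - (if ∃ d, P d ∧ r d c then 1 else 0)

/-- A node with preference relation `r` prefers the partners `P` to the partners `Q`; this is the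
common form of `prefersA` and `prefersB`. -/
def PrefersPartners {β : Type*} (r : β → β → Prop) (P Q : β → Prop) : Prop :=
  ∃ c, P c ∧ ((¬ ∃ d, Q d) ∨ ∃ d, Q d ∧ r c d)

/-- The sum of the votes of `a` and `b` on switching from `M` to the edge `(a, b)`. -/
def edgeVotes (I : PrefSys A B) (M : Finset (A × B)) (a : A) (b : B) : ℤ :=
  vote (I.prefA a) (fun b' => (a, b') ∈ M) b + vote (I.prefB b) (fun a' => (a', b) ∈ M) a

variable {β : Type*} {r : β → β → Prop} {P Q : β → Prop} {c d : β}

theorem neg_one_le_vote : -1 ≤ vote r P c := by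
  unfold vote
  split_ifs <;> norm_num

theorem vote_eq_zero_of_forall_not (hP : ∀ d, ¬ P d) : vote r P c = 0 := by
  simp [vote, hP]

theorem vote_of_forall_iff_eq (hP : ∀ x, P x ↔ x = d) :
    vote r P c = (if r c d then 1 else 0) - (if r d c then 1 else 0) := by
  simp [vote, hP]

theorem eq_false_or_exists_eq_of_unique (hP : ∀ x y, P x → P y → x = y) :
    P = (fun _ => False) ∨ ∃ d, P = (· = d) := by
  by_cases h : ∃ d, P d
  · obtain ⟨d, hd⟩ := h
    exact Or.inr ⟨d, funext fun x => propext ⟨fun hx => hP x d hx hd, fun hx => hx ▸ hd⟩⟩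
  · exact Or.inl (funext fun x => eq_false fun hx => h ⟨x, hx⟩)

theorem prefersPartners_sub_eq_sum_vote [Fintype β] (r : β → β → Prop)
    (hP : ∀ x y, P x → P y → x = y) (hQ : ∀ x y, Q x → Q y → x = y) :
    ((if PrefersPartners r Q P then 1 else 0) - (if PrefersPartners r P Q then 1 else 0) : ℤ) =
      ∑ c with Q c, vote r P c + (∑ c with Q c, 1 - ∑ c with P c, 1) := by
  have hsingleton (f : β → ℤ) (d : β) : ∑ c with c = d, f c = f d := by
    simp [Finset.sum_filter]
  rcases eq_false_or_exists_eq_of_unique hP with rfl | ⟨d, rfl⟩ <;>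
    rcases eq_false_or_exists_eq_of_unique hQ with rfl | ⟨c, rfl⟩ <;>
    simp only [hsingleton] <;>
    simp [PrefersPartners, vote]

variable {I : PrefSys A B} {M N : Finset (A × B)} {a : A} {b : B}

theorem IsMatching.unique_left (hM : IsMatching I M) {b b' : B} (h : (a, b) ∈ M)
    (h' : (a, b') ∈ M) : b = b' :=
  (Prod.ext_iff.1 (hM.2.1 _ h _ h' rfl)).2

theorem IsMatching.unique_right (hM : IsMatching I M) {a a' : A} (h : (a, b) ∈ M)
    (h' : (a', b) ∈ M) : a = a' :=
  (Prod.ext_iff.1 (hM.2.2 _ h _ h' rfl)).1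

theorem IsMatching.sum_prefersA_sub [Fintype A] [Finite B] (hM : IsMatching I M)
    (hN : IsMatching I N) :
    ∑ a, ((if prefersA I a N M then 1 else 0) - (if prefersA I a M N then 1 else 0) : ℤ) =
      ∑ p ∈ N, vote (I.prefA p.1) (fun b => (p.1, b) ∈ M) p.2 + (N.card - M.card) := by
  have := Fintype.ofFinite B
  have hsum (L : Finset (A × B)) (f : A → B → ℤ) :
      ∑ p ∈ L, f p.1 p.2 = ∑ a, ∑ b with (a, b) ∈ L, f a b :=
    Finset.sum_finset_product' L _ _ (by simp)
  push_cast [Finset.card_eq_sum_ones]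
  rw [hsum N fun a b => vote (I.prefA a) (fun b' => (a, b') ∈ M) b, hsum N fun _ _ => 1,
    hsum M fun _ _ => 1, ← Finset.sum_sub_distrib, ← Finset.sum_add_distrib]
  refine Finset.sum_congr rfl fun a _ => ?_
  convert prefersPartners_sub_eq_sum_vote (P := fun b => (a, b) ∈ M)
    (Q := fun b => (a, b) ∈ N) (I.prefA a)
    (fun _ _ => hM.unique_left) (fun _ _ => hN.unique_left) <;> rfl

theorem IsMatching.sum_prefersB_sub [Finite A] [Fintype B] (hM : IsMatching I M)
    (hN : IsMatching I N) :
    ∑ b, ((if prefersB I b N M then 1 else 0) - (if prefersB I b M N then 1 else 0) : ℤ) =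
      ∑ p ∈ N, vote (I.prefB p.2) (fun a => (a, p.2) ∈ M) p.1 + (N.card - M.card) := by
  have := Fintype.ofFinite A
  have hsum (L : Finset (A × B)) (f : A → B → ℤ) :
      ∑ p ∈ L, f p.1 p.2 = ∑ b, ∑ a with (a, b) ∈ L, f a b :=
    Finset.sum_finset_product_right' L _ _ (by simp)
  push_cast [Finset.card_eq_sum_ones]
  rw [hsum N fun a b => vote (I.prefB b) (fun a' => (a', b) ∈ M) a, hsum N fun _ _ => 1,
    hsum M fun _ _ => 1, ← Finset.sum_sub_distrib, ← Finset.sum_add_distrib]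
  refine Finset.sum_congr rfl fun b _ => ?_
  convert prefersPartners_sub_eq_sum_vote (P := fun a => (a, b) ∈ M)
    (Q := fun a => (a, b) ∈ N) (I.prefB b)
    (fun _ _ => hM.unique_right) (fun _ _ => hN.unique_right) <;> rfl

theorem phi_eq_sum_prefersA_add_sum_prefersB [Fintype A] [Fintype B] :
    (phi I M N : ℤ) = (∑ a, if prefersA I a M N then 1 else 0) +
      ∑ b, if prefersB I b M N then 1 else 0 := by
  rw [phi, Finset.natCast_card_filter, Fintype.sum_sum_type]
  rfl

theorem IsMatching.Delta_eq_sum_edgeVotes [Fintype A] [Fintype B] (hM : IsMatching I M)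
    (hN : IsMatching I N) :
    Delta I N M = ∑ p ∈ N, edgeVotes I M p.1 p.2 + 2 * (N.card - M.card) := by
  have hA := hM.sum_prefersA_sub hN
  have hB := hM.sum_prefersB_sub hN
  rw [Finset.sum_sub_distrib] at hA hB
  simp only [Delta, phi_eq_sum_prefersA_add_sum_prefersB, edgeVotes, Finset.sum_add_distrib]
  linarith

theorem IsPopularMaxMatching.sum_edgeVotes_nonpos [Fintype A] [Fintype B]
    (hM : IsPopularMaxMatching I M) (hN : IsMatching I N) (hcard : N.card = M.card) :
    ∑ p ∈ N, edgeVotes I M p.1 p.2 ≤ 0 := by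
  have hDelta : 0 ≤ Delta I M N := hM.2 N ⟨hN, fun L hL => hcard ▸ hM.1.2 L hL⟩
  have hanti : Delta I N M = -Delta I M N := (neg_sub _ _).symm
  have := hM.1.1.Delta_eq_sum_edgeVotes hN
  rw [hcard] at this
  linarith

theorem IsMatching.edgeVotes_eq (hM : IsMatching I M) {a' : A} {b' : B} (ha : (a, b') ∈ M)
    (hb : (a', b) ∈ M) :
    edgeVotes I M a b =
      ((if I.prefA a b b' then 1 else 0) - (if I.prefA a b' b then 1 else 0)) +
      ((if I.prefB b a a' then 1 else 0) - (if I.prefB b a' a then 1 else 0)) := by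
  rw [edgeVotes, vote_of_forall_iff_eq (d := b'), vote_of_forall_iff_eq (d := a')]
  · exact fun x => ⟨fun hx => hM.unique_right hx hb, fun hx => hx ▸ hb⟩
  · exact fun x => ⟨fun hx => hM.unique_left hx ha, fun hx => hx ▸ ha⟩

theorem IsMatching.edgeVotes_eq_zero_of_mem (hM : IsMatching I M) (hab : (a, b) ∈ M) :
    edgeVotes I M a b = 0 := by
  simp [hM.edgeVotes_eq hab hab]

theorem neg_one_le_edgeVotes_of_not_matchedA (ha : ¬ matchedA M a) : -1 ≤ edgeVotes I M a b := by
  rw [edgeVotes, vote_eq_zero_of_forall_not (not_exists.1 ha), zero_add]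
  exact neg_one_le_vote

theorem neg_one_le_edgeVotes_of_not_matchedB (hb : ¬ matchedB M b) : -1 ≤ edgeVotes I M a b := by
  rw [edgeVotes, vote_eq_zero_of_forall_not (not_exists.1 hb), add_zero]
  exact neg_one_le_vote

theorem even_wt : Even (wt I M a b) := by
  unfold wt
  split_ifs <;> decide

theorem wt_le_two : wt I M a b ≤ 2 := by
  unfold wt
  split_ifs <;> norm_num

theorem IsMatching.wt_eq (hM : IsMatching I M) {a' : A} {b' : B} (ha : (a, b') ∈ M)
    (hb : (a', b) ∈ M) :
    wt I M a b = if I.E a b ∧ (a, b) ∉ M ∧ I.prefA a b b' ∧ I.prefB b a a' then 2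
      else if I.prefA a b' b ∧ I.prefB b a' a then -2 else 0 := by
  have hpartnerA (x : B) : (a, x) ∈ M ↔ x = b' :=
    ⟨fun hx => hM.unique_left hx ha, fun hx => hx ▸ ha⟩
  have hpartnerB (x : A) : (x, b) ∈ M ↔ x = a' :=
    ⟨fun hx => hM.unique_right hx hb, fun hx => hx ▸ hb⟩
  simp [wt, Blocks, matchedA, matchedB, hpartnerA, hpartnerB]

theorem IsMatching.wt_eq_edgeVotes (hI : I.IsTournament) (hM : IsMatching I M) (hE : I.E a b)
    (ha : matchedA M a) (hb : matchedB M b) : wt I M a b = edgeVotes I M a b := by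
  obtain ⟨b', ha⟩ := ha
  obtain ⟨a', hb⟩ := hb
  rw [hM.wt_eq ha hb, hM.edgeVotes_eq ha hb]
  have hEa := hM.1 _ ha
  have hEb := hM.1 _ hb
  by_cases hab : (a, b) ∈ M
  · obtain rfl := hM.unique_left hab ha
    obtain rfl := hM.unique_right hab hb
    have hirrefl : ¬ I.prefA a b b := fun h => hI.asymmA a b b hE hE h h
    simp [hab, hirrefl]
  · have htotalA := hI.totalA a b b' hE hEa (by rintro rfl; exact hab ha)
    have htotalB := hI.totalB b a a' hE hEb (by rintro rfl; exact hab hb)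
    have hasymmA := hI.asymmA a b b' hE hEa
    have hasymmB := hI.asymmB b a a' hE hEb
    rcases htotalA with hA | hA <;> rcases htotalB with hB | hB <;> simp_all

end Votes

/-! ### Exchanges -/

section Exchange

variable {I : PrefSys A B} {M N P Q : Finset (A × B)} {a x : A} {b y : B}

theorem matchedA_insert : matchedA (insert (a, b) M) x ↔ x = a ∨ matchedA M x := by
  simp [matchedA, exists_or]

theorem matchedB_insert : matchedB (insert (a, b) M) y ↔ y = b ∨ matchedB M y := by
  simp [matchedB, exists_or]

theorem isMatching_empty : IsMatching I ∅ := by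
  simp [IsMatching]

theorem IsMatching.subset (hM : IsMatching I M) (h : N ⊆ M) : IsMatching I N :=
  ⟨fun p hp => hM.1 p (h hp), fun p hp q hq => hM.2.1 p (h hp) q (h hq),
    fun p hp q hq => hM.2.2 p (h hp) q (h hq)⟩

theorem IsMatching.union (hM : IsMatching I M) (hN : IsMatching I N)
    (hA : ∀ p ∈ N, ¬ matchedA M p.1) (hB : ∀ p ∈ N, ¬ matchedB M p.2) :
    IsMatching I (M ∪ N) := by
  have hA' : ∀ p ∈ M, ∀ q ∈ N, p.1 ≠ q.1 := fun p hp q hq h => hA q hq ⟨p.2, h ▸ hp⟩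
  have hB' : ∀ p ∈ M, ∀ q ∈ N, p.2 ≠ q.2 := fun p hp q hq h => hB q hq ⟨p.1, h ▸ hp⟩
  simp only [IsMatching, Finset.mem_union]
  refine ⟨fun p hp => hp.elim (hM.1 p) (hN.1 p), ?_, ?_⟩
  · rintro p (hp | hp) q (hq | hq) h
    · exact hM.2.1 p hp q hq h
    · exact absurd h (hA' p hp q hq)
    · exact absurd h.symm (hA' q hq p hp)
    · exact hN.2.1 p hp q hq h
  · rintro p (hp | hp) q (hq | hq) h
    · exact hM.2.2 p hp q hq h
    · exact absurd h (hB' p hp q hq)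
    · exact absurd h.symm (hB' q hq p hp)
    · exact hN.2.2 p hp q hq h

theorem IsMatching.insert_of_not_matched (hM : IsMatching I M) (hE : I.E a b) (ha : ¬ matchedA M a)
    (hb : ¬ matchedB M b) : IsMatching I (insert (a, b) M) := by
  have hsingleton : IsMatching I {(a, b)} := by simpa [IsMatching] using hE
  rw [Finset.insert_eq, Finset.union_comm]
  exact hM.union hsingleton (by simpa using ha) (by simpa using hb)

theorem IsMaximumMatching.matchedA_or_matchedB (hM : IsMaximumMatching I M) (hE : I.E a b) :
    matchedA M a ∨ matchedB M b := by
  by_contra! hfree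
  have hcard := hM.2 _ (hM.1.insert_of_not_matched hE hfree.1 hfree.2)
  rw [Finset.card_insert_of_notMem fun h => hfree.1 ⟨b, h⟩] at hcard
  omega

theorem IsMatching.card_filter_matchedA [Fintype A] (hM : IsMatching I M) :
    (Finset.univ.filter (matchedA M)).card = M.card := by
  have himage : Finset.univ.filter (matchedA M) = M.image Prod.fst := by
    ext a
    simp [matchedA]
  rw [himage, Finset.card_image_of_injOn fun p hp q hq => hM.2.1 p hp q hq]

/-- The edges `P` of `M` may be exchanged for the matching `Q`: every node of `Q` that `M` matches
is matched in `P`, so that `(M \ P) ∪ Q` is again a matching. -/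
structure IsExchange (I : PrefSys A B) (M P Q : Finset (A × B)) : Prop where
  subset : P ⊆ M
  isMatching : IsMatching I Q
  matchedA_imp : ∀ a, matchedA Q a → matchedA M a → matchedA P a
  matchedB_imp : ∀ b, matchedB Q b → matchedB M b → matchedB P b

namespace IsExchange

theorem insert_of_not_matched (h : IsExchange I M P Q) (hE : I.E a b) (ha : ¬ matchedA Q a)
    (hb : ¬ matchedB Q b) (haP : matchedA M a → matchedA P a) (hbP : matchedB M b → matchedB P b) :
    IsExchange I M P (insert (a, b) Q) where
  subset := h.subset
  isMatching := h.isMatching.insert_of_not_matched hE ha hb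
  matchedA_imp x hx := by
    rcases matchedA_insert.1 hx with rfl | hx
    exacts [haP, h.matchedA_imp x hx]
  matchedB_imp y hy := by
    rcases matchedB_insert.1 hy with rfl | hy
    exacts [hbP, h.matchedB_imp y hy]

theorem not_matchedA_sdiff (h : IsExchange I M P Q) (hM : IsMatching I M) {p : A × B}
    (hp : p ∈ Q) : ¬ matchedA (M \ P) p.1 := by
  rintro ⟨b, hb⟩
  rw [Finset.mem_sdiff] at hb
  obtain ⟨b', hb'⟩ := h.matchedA_imp p.1 ⟨p.2, hp⟩ ⟨b, hb.1⟩
  exact hb.2 (hM.unique_left hb.1 (h.subset hb') ▸ hb')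

theorem not_matchedB_sdiff (h : IsExchange I M P Q) (hM : IsMatching I M) {p : A × B}
    (hp : p ∈ Q) : ¬ matchedB (M \ P) p.2 := by
  rintro ⟨a, ha⟩
  rw [Finset.mem_sdiff] at ha
  obtain ⟨a', ha'⟩ := h.matchedB_imp p.2 ⟨p.1, hp⟩ ⟨a, ha.1⟩
  exact ha.2 (hM.unique_right ha.1 (h.subset ha') ▸ ha')

theorem isMatching_sdiff_union (h : IsExchange I M P Q) (hM : IsMatching I M) :
    IsMatching I (M \ P ∪ Q) :=
  (hM.subset Finset.sdiff_subset).union h.isMatching (fun _ => h.not_matchedA_sdiff hM)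
    fun _ => h.not_matchedB_sdiff hM

theorem disjoint (h : IsExchange I M P Q) (hM : IsMatching I M) : Disjoint (M \ P) Q :=
  Finset.disjoint_right.2 fun p hpQ hpM => h.not_matchedA_sdiff hM hpQ ⟨p.2, hpM⟩

theorem card_sdiff_union (h : IsExchange I M P Q) (hM : IsMatching I M) :
    (M \ P ∪ Q).card + P.card = M.card + Q.card := by
  rw [Finset.card_union_of_disjoint (h.disjoint hM), add_right_comm,
    Finset.card_sdiff_add_card_eq_card h.subset]

theorem card_le (h : IsExchange I M P Q) (hM : IsMaximumMatching I M) : Q.card ≤ P.card := by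
  have := hM.2 _ (h.isMatching_sdiff_union hM.1)
  have := h.card_sdiff_union hM.1
  omega

theorem sum_edgeVotes_nonpos [Fintype A] [Fintype B] (h : IsExchange I M P Q)
    (hM : IsPopularMaxMatching I M) (hcard : Q.card = P.card) :
    ∑ p ∈ Q, edgeVotes I M p.1 p.2 ≤ 0 := by
  have hcard' := h.card_sdiff_union hM.1.1
  have hsum := hM.sum_edgeVotes_nonpos (h.isMatching_sdiff_union hM.1.1) (by omega)
  have hkept : ∑ p ∈ M \ P, edgeVotes I M p.1 p.2 = 0 :=
    Finset.sum_eq_zero fun p hp =>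
      hM.1.1.edgeVotes_eq_zero_of_mem (Finset.sdiff_subset hp)
  rwa [Finset.sum_union (h.disjoint hM.1.1), hkept, zero_add] at hsum

end IsExchange

end Exchange

/-! ### Exchanges along paths of matched edges -/

section Switch

/-- The digraph on the edges of `M` in which paths are `M`-alternating paths of `G`: an arc leads
from `u` to `v` if `G` joins the `A`-node of `u` to the `B`-node of `v`. -/
def SwitchArc (I : PrefSys A B) (M : Finset (A × B)) (u v : M) : Prop :=
  I.E u.1.1 v.1.2

/-- Half of the weight `wt_M` of the edge of `G` that underlies an arc of `SwitchArc`. -/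
def halfWt (I : PrefSys A B) (M : Finset (A × B)) (u v : M) : ℤ :=
  wt I M u.1.1 v.1.2 / 2

/-- The edges of `G` that underlie the arcs between consecutive vertices of a list. -/
def linkEdges {M : Finset (A × B)} : List M → Finset (A × B)
  | u :: v :: l => insert (u.1.1, v.1.2) (linkEdges (v :: l))
  | _ => ∅

variable {I : PrefSys A B} {M : Finset (A × B)} {a : M} {l : List M} {x : A} {y : B}

theorem halfWt_le_one (u v : M) : halfWt I M u v ≤ 1 :=
  Int.ediv_le_ediv two_pos wt_le_two

theorem two_mul_halfWt (u v : M) : 2 * halfWt I M u v = wt I M u.1.1 v.1.2 :=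
  Int.two_mul_ediv_two_of_even even_wt

theorem matchedA_coe (v : M) : matchedA M v.1.1 := ⟨v.1.2, v.2⟩

theorem matchedB_coe (v : M) : matchedB M v.1.2 := ⟨v.1.1, v.2⟩

theorem IsMatching.injective_fst (hM : IsMatching I M) : Function.Injective fun v : M => v.1.1 :=
  fun u v h => Subtype.ext (hM.2.1 u u.2 v v.2 h)

theorem IsMatching.injective_snd (hM : IsMatching I M) : Function.Injective fun v : M => v.1.2 :=
  fun u v h => Subtype.ext (hM.2.2 u u.2 v v.2 h)

theorem IsMatching.exists_forall_inl_eq_and_forall_inr_eq {γ : Type*} [Nonempty γ]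
    (hM : IsMatching I M) (f g : M → γ) :
    ∃ α : A ⊕ B → γ, (∀ v : M, α (Sum.inl v.1.1) = f v) ∧ ∀ v : M, α (Sum.inr v.1.2) = g v := by
  obtain ⟨fA, hfA⟩ := hM.injective_fst.surjective_comp_right f
  obtain ⟨gB, hgB⟩ := hM.injective_snd.surjective_comp_right g
  exact ⟨Sum.elim fA gB, congrFun hfA, congrFun hgB⟩

theorem exists_mem_dropLast_of_matchedA_linkEdges (h : matchedA (linkEdges l) x) :
    ∃ v ∈ l.dropLast, v.1.1 = x := by
  fun_induction linkEdges l with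
  | case1 u v l ih =>
    rcases matchedA_insert.1 h with rfl | h
    · exact ⟨u, by simp, rfl⟩
    · obtain ⟨v', hv', rfl⟩ := ih h
      exact ⟨v', by simp [hv'], rfl⟩
  | case2 => simp [matchedA] at h

theorem exists_mem_tail_of_matchedB_linkEdges (h : matchedB (linkEdges l) y) :
    ∃ v ∈ l.tail, v.1.2 = y := by
  fun_induction linkEdges l with
  | case1 u v l ih =>
    rcases matchedB_insert.1 h with rfl | h
    · exact ⟨v, by simp, rfl⟩
    · obtain ⟨v', hv', rfl⟩ := ih h
      exact ⟨v', List.mem_of_mem_tail hv', rfl⟩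
  | case2 => simp [matchedB] at h

theorem IsMatching.not_matchedA_linkEdges_of_notMem (hM : IsMatching I M) (ha : a ∉ l) :
    ¬ matchedA (linkEdges l) a.1.1 := fun h => by
  obtain ⟨v, hv, hva⟩ := exists_mem_dropLast_of_matchedA_linkEdges h
  exact ha (hM.injective_fst hva ▸ List.mem_of_mem_dropLast hv)

theorem IsMatching.not_matchedA_linkEdges_cons (hM : IsMatching I M) (hl : (a :: l).Nodup)
    (hx : matchedA M x → x = (l.getLastD a).1.1) : ¬ matchedA (linkEdges (a :: l)) x := fun h => by
  obtain ⟨v, hv, rfl⟩ := exists_mem_dropLast_of_matchedA_linkEdges h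
  refine List.Pairwise.rel_dropLast_getLast hl hv ?_
  rw [List.getLast_eq_getLastD]
  exact hM.injective_fst (hx (matchedA_coe v))

theorem IsMatching.not_matchedB_linkEdges_cons (hM : IsMatching I M) (hl : (a :: l).Nodup)
    (hy : matchedB M y → y = a.1.2) : ¬ matchedB (linkEdges (a :: l)) y := fun h => by
  obtain ⟨v, hv, rfl⟩ := exists_mem_tail_of_matchedB_linkEdges h
  exact (List.nodup_cons.1 hl).1 (hM.injective_snd (hy (matchedB_coe v)) ▸ hv)

theorem IsMatching.isMatching_linkEdges (hM : IsMatching I M)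
    (hl : IsSimplePath (SwitchArc I M) l) : IsMatching I (linkEdges l) := by
  fun_induction linkEdges l with
  | case1 u v l ih =>
    exact (ih hl.of_cons).insert_of_not_matched (List.isChain_cons_cons.1 hl.1).1
      (hM.not_matchedA_linkEdges_of_notMem (List.nodup_cons.1 hl.2).1)
      (hM.not_matchedB_linkEdges_cons hl.of_cons.2 fun _ => rfl)
  | case2 => exact isMatching_empty

theorem IsMatching.notMem_linkEdges (hM : IsMatching I M) {u : M} (hu : u ∉ l) :
    (u.1.1, y) ∉ linkEdges l :=
  fun h => hM.not_matchedA_linkEdges_of_notMem hu ⟨y, h⟩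

theorem IsMatching.card_linkEdges_cons (hM : IsMatching I M) (hl : (a :: l).Nodup) :
    (linkEdges (a :: l)).card = l.length := by
  induction l generalizing a with
  | nil => rfl
  | cons b l ih =>
    rw [List.nodup_cons] at hl
    rw [linkEdges, Finset.card_insert_of_notMem (hM.notMem_linkEdges hl.1), ih hl.2,
      List.length_cons]

theorem IsMatching.sum_edgeVotes_linkEdges (hI : I.IsTournament) (hM : IsMatching I M)
    (hl : IsSimplePath (SwitchArc I M) l) :
    ∑ p ∈ linkEdges l, edgeVotes I M p.1 p.2 = 2 * pathWeight (halfWt I M) l := by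
  fun_induction linkEdges l with
  | case1 u v l ih =>
    rw [Finset.sum_insert (hM.notMem_linkEdges (List.nodup_cons.1 hl.2).1), ih hl.of_cons,
      pathWeight, mul_add, two_mul_halfWt, hM.wt_eq_edgeVotes hI (List.isChain_cons_cons.1 hl.1).1
        (matchedA_coe u) (matchedB_coe v)]
  | case2 l h =>
    rw [pathWeight, Finset.sum_empty, mul_zero]
    exact h

/-- The edges of `M` on a path of `SwitchArc`. -/
def pathEdges {M : Finset (A × B)} (l : List M) : Finset (A × B) :=
  l.toFinset.map (Function.Embedding.subtype _)

theorem card_pathEdges_cons (hl : (a :: l).Nodup) : (pathEdges (a :: l)).card = l.length + 1 := by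
  rw [pathEdges, Finset.card_map, List.toFinset_card_of_nodup hl, List.length_cons]

theorem coe_mem_pathEdges (h : a ∈ l) : a.1 ∈ pathEdges l := by
  simpa [pathEdges] using h

theorem IsMatching.isExchange_linkEdges (hM : IsMatching I M)
    (hl : IsSimplePath (SwitchArc I M) l) : IsExchange I M (pathEdges l) (linkEdges l) where
  subset := Finset.map_subtype_subset _
  isMatching := hM.isMatching_linkEdges hl
  matchedA_imp x hx _ := by
    obtain ⟨v, hv, rfl⟩ := exists_mem_dropLast_of_matchedA_linkEdges hx
    exact ⟨v.1.2, coe_mem_pathEdges (List.mem_of_mem_dropLast hv)⟩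
  matchedB_imp y hy _ := by
    obtain ⟨v, hv, rfl⟩ := exists_mem_tail_of_matchedB_linkEdges hy
    exact ⟨v.1.1, coe_mem_pathEdges (List.mem_of_mem_tail hv)⟩

end Switch

/-! ### The potential of a popular max-matching -/

section Popular

/-- The lower bound `-(n₀ - 1)` on the potential of a matched edge, raised to `0` where condition
(i) prescribes the value `0`. -/
def potentialLower (I : PrefSys A B) (M : Finset (A × B)) (v : M) : ℤ :=
  if ∃ b, I.E v.1.1 b ∧ ¬ matchedB M b then 0 else 1 - M.card

/-- The upper bound `0` on the potential of a matched edge, lowered to `-(n₀ - 1)` where condition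
(ii) prescribes the value `-(n₀ - 1)`. -/
def potentialUpper (I : PrefSys A B) (M : Finset (A × B)) (v : M) : ℤ :=
  if ∃ a, I.E a v.1.2 ∧ ¬ matchedA M a then 1 - M.card else 0

variable {I : PrefSys A B} {M : Finset (A × B)} {a : M} {l : List M} {x : A} {y : B}

theorem one_sub_card_nonpos (v : M) : 1 - (M.card : ℤ) ≤ 0 := by
  have : 0 < M.card := Finset.card_pos.2 ⟨v, v.2⟩
  omega

theorem le_potentialLower : 1 - (M.card : ℤ) ≤ potentialLower I M a := by
  unfold potentialLower
  split_ifs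
  exacts [one_sub_card_nonpos a, le_rfl]

theorem potentialUpper_nonpos : potentialUpper I M a ≤ 0 := by
  unfold potentialUpper
  split_ifs
  exacts [one_sub_card_nonpos a, le_rfl]

theorem IsMatching.isExchange_insert_linkEdges (hM : IsMatching I M)
    (hl : IsSimplePath (SwitchArc I M) (a :: l)) (hE : I.E x y)
    (hx : matchedA M x → x = (l.getLastD a).1.1) (hy : matchedB M y → y = a.1.2) :
    IsExchange I M (pathEdges (a :: l)) (insert (x, y) (linkEdges (a :: l))) := by
  refine (hM.isExchange_linkEdges hl).insert_of_not_matched hE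
    (hM.not_matchedA_linkEdges_cons hl.2 hx) (hM.not_matchedB_linkEdges_cons hl.2 hy)
    (fun h => ?_) (fun h => ?_)
  · exact hx h ▸ ⟨_, coe_mem_pathEdges List.getLastD_mem_cons⟩
  · exact hy h ▸ ⟨_, coe_mem_pathEdges List.mem_cons_self⟩

theorem IsMatching.notMem_linkEdges_cons (hM : IsMatching I M) (hl : (a :: l).Nodup)
    (hx : matchedA M x → x = (l.getLastD a).1.1) : (x, y) ∉ linkEdges (a :: l) :=
  fun h => hM.not_matchedA_linkEdges_cons hl hx ⟨y, h⟩

theorem IsMaximumMatching.matchedB_of_adj_getLastD (hM : IsMaximumMatching I M)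
    (hl : IsSimplePath (SwitchArc I M) (a :: l)) (hstart : I.E x a.1.2) (hx : ¬ matchedA M x)
    (hend : I.E (l.getLastD a).1.1 y) : matchedB M y := by
  by_contra hy
  have hfreeA : matchedA M x → x = (l.getLastD a).1.1 := fun h => absurd h hx
  have hA : ¬ matchedA (insert (x, a.1.2) (linkEdges (a :: l))) (l.getLastD a).1.1 := by
    rw [matchedA_insert, not_or]
    exact ⟨fun h => hx (h ▸ matchedA_coe _), hM.1.not_matchedA_linkEdges_cons hl.2 fun _ => rfl⟩
  have hB : ¬ matchedB (insert (x, a.1.2) (linkEdges (a :: l))) y := by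
    rw [matchedB_insert, not_or]
    exact ⟨fun h => hy (h ▸ matchedB_coe _),
      hM.1.not_matchedB_linkEdges_cons hl.2 fun h => absurd h hy⟩
  have hstartExchange := hM.1.isExchange_insert_linkEdges hl hstart hfreeA fun _ => rfl
  have hexchange := hstartExchange.insert_of_not_matched hend hA hB
    (fun _ => ⟨_, coe_mem_pathEdges List.getLastD_mem_cons⟩) fun h => absurd h hy
  have hcard := hexchange.card_le hM
  rw [Finset.card_insert_of_notMem fun h => hA ⟨y, h⟩,
    Finset.card_insert_of_notMem (hM.1.notMem_linkEdges_cons hl.2 hfreeA),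
    hM.1.card_linkEdges_cons hl.2, card_pathEdges_cons hl.2] at hcard
  omega

variable [Fintype A] [Fintype B]

theorem IsPopularMaxMatching.two_mul_pathWeight_add_edgeVotes_nonpos (hI : I.IsTournament)
    (hM : IsPopularMaxMatching I M) (hl : IsSimplePath (SwitchArc I M) (a :: l)) (hE : I.E x y)
    (hx : matchedA M x → x = (l.getLastD a).1.1) (hy : matchedB M y → y = a.1.2) :
    2 * pathWeight (halfWt I M) (a :: l) + edgeVotes I M x y ≤ 0 := by
  have hnotMem : (x, y) ∉ linkEdges (a :: l) := hM.1.1.notMem_linkEdges_cons hl.2 hx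
  have hcard : (insert (x, y) (linkEdges (a :: l))).card = (pathEdges (a :: l)).card := by
    rw [Finset.card_insert_of_notMem hnotMem, hM.1.1.card_linkEdges_cons hl.2,
      card_pathEdges_cons hl.2]
  have hsum := (hM.1.1.isExchange_insert_linkEdges hl hE hx hy).sum_edgeVotes_nonpos hM hcard
  rwa [Finset.sum_insert hnotMem, hM.1.1.sum_edgeVotes_linkEdges hI hl, add_comm] at hsum

theorem IsPopularMaxMatching.pathWeight_add_halfWt_nonpos (hI : I.IsTournament)
    (hM : IsPopularMaxMatching I M) (hl : IsSimplePath (SwitchArc I M) (a :: l))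
    (hclose : SwitchArc I M (l.getLastD a) a) :
    pathWeight (halfWt I M) (a :: l) + halfWt I M (l.getLastD a) a ≤ 0 := by
  have hvotes := hM.two_mul_pathWeight_add_edgeVotes_nonpos hI hl hclose (fun _ => rfl)
    (fun _ => rfl)
  rw [← hM.1.1.wt_eq_edgeVotes hI hclose (matchedA_coe _) (matchedB_coe _),
    ← two_mul_halfWt] at hvotes
  linarith

theorem IsPopularMaxMatching.pathWeight_nonpos_of_adj_unmatchedA (hI : I.IsTournament)
    (hM : IsPopularMaxMatching I M) (hl : IsSimplePath (SwitchArc I M) (a :: l))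
    (hE : I.E x a.1.2) (hx : ¬ matchedA M x) : pathWeight (halfWt I M) (a :: l) ≤ 0 := by
  have := hM.two_mul_pathWeight_add_edgeVotes_nonpos hI hl hE (fun h => absurd h hx)
    (fun _ => rfl)
  have := neg_one_le_edgeVotes_of_not_matchedA (I := I) (b := a.1.2) hx
  omega

theorem IsPopularMaxMatching.pathWeight_nonpos_of_adj_unmatchedB (hI : I.IsTournament)
    (hM : IsPopularMaxMatching I M) (hl : IsSimplePath (SwitchArc I M) (a :: l))
    (hE : I.E (l.getLastD a).1.1 y) (hy : ¬ matchedB M y) :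
    pathWeight (halfWt I M) (a :: l) ≤ 0 := by
  have := hM.two_mul_pathWeight_add_edgeVotes_nonpos hI hl hE (fun _ => rfl)
    (fun h => absurd h hy)
  have := neg_one_le_edgeVotes_of_not_matchedB (I := I) (a := (l.getLastD a).1.1) hy
  omega

theorem IsPopularMaxMatching.pathWeight_add_potentialLower_le (hI : I.IsTournament)
    (hM : IsPopularMaxMatching I M) (hl : IsSimplePath (SwitchArc I M) (a :: l)) :
    pathWeight (halfWt I M) (a :: l) + potentialLower I M (l.getLastD a) ≤
      potentialUpper I M a := by
  unfold potentialLower potentialUpper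
  split_ifs with hend hstart hstart
  · obtain ⟨y, hEy, hy⟩ := hend
    obtain ⟨x, hEx, hx⟩ := hstart
    exact absurd (hM.1.matchedB_of_adj_getLastD hl hEx hx hEy) hy
  · obtain ⟨y, hE, hy⟩ := hend
    simpa using hM.pathWeight_nonpos_of_adj_unmatchedB hI hl hE hy
  · obtain ⟨x, hE, hx⟩ := hstart
    simpa using hM.pathWeight_nonpos_of_adj_unmatchedA hI hl hE hx
  · have := hl.pathWeight_le_card_sub_one (halfWt_le_one (I := I))
    rw [Fintype.card_coe] at this
    linarith

theorem IsPopularMaxMatching.exists_potential (hI : I.IsTournament)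
    (hM : IsPopularMaxMatching I M) :
    ∃ π : M → ℤ, (∀ v, 1 - (M.card : ℤ) ≤ π v ∧ π v ≤ 0) ∧
      (∀ u v : M, I.E u.1.1 v.1.2 → wt I M u.1.1 v.1.2 ≤ 2 * π u - 2 * π v) ∧
      (∀ v : M, (∃ b, I.E v.1.1 b ∧ ¬ matchedB M b) → π v = 0) ∧
      ∀ v : M, (∃ a, I.E a v.1.2 ∧ ¬ matchedA M a) → π v = 1 - (M.card : ℤ) := by
  obtain ⟨π, hlower, hupper, harc⟩ := exists_potential_between
    (fun _ _ => hM.pathWeight_add_potentialLower_le hI)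
    (fun _ _ => hM.pathWeight_add_halfWt_nonpos hI)
  have hge (v : M) : 1 - (M.card : ℤ) ≤ π v := le_potentialLower.trans (hlower v)
  have hle (v : M) : π v ≤ 0 := (hupper v).trans potentialUpper_nonpos
  refine ⟨π, fun v => ⟨hge v, hle v⟩, fun u v hE => ?_, fun v hv => ?_, fun v hv => ?_⟩
  · have := harc u v hE
    rw [← two_mul_halfWt]
    linarith
  · exact (hle v).antisymm (by simpa only [potentialLower, if_pos hv] using hlower v)
  · exact (hge v).antisymm' (by simpa only [potentialUpper, if_pos hv] using hupper v)

end Popular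

theorem stmt13_general {A B : Type*} [Fintype A] [Fintype B] (I : PrefSys A B)
    (hI : I.IsTournament) (M : Finset (A × B)) (hM : IsPopularMaxMatching I M) :
    ∃ α : A ⊕ B → ℤ,
      (∀ a b, I.E a b → matchedA M a → matchedB M b →
          wt I M a b ≤ α (Sum.inl a) + α (Sum.inr b)) ∧
      (∀ a b, (a, b) ∈ M → α (Sum.inl a) + α (Sum.inr b) = 0) ∧
      (∀ a : A, matchedA M a → ∃ k : ℕ, k ≤ M.card - 1 ∧ α (Sum.inl a) = -(2 * (k : ℤ))) ∧
      (∀ b : B, matchedB M b → ∃ k : ℕ, k ≤ M.card - 1 ∧ α (Sum.inr b) = 2 * (k : ℤ)) ∧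
      (∀ a : A, (∃ b, I.E a b ∧ ¬ matchedB M b) → α (Sum.inl a) = 0) ∧
      (∀ b : B, (∃ a, I.E a b ∧ ¬ matchedA M a) →
          α (Sum.inr b) = 2 * ((M.card : ℤ) - 1)) := by
  obtain ⟨π, hbounds, harc, hzero, hlow⟩ := hM.exists_potential hI
  have hlevel (v : M) : ∃ k : ℕ, k ≤ M.card - 1 ∧ π v = -(k : ℤ) :=
    ⟨(-π v).toNat, by have := hbounds v; omega, by have := hbounds v; omega⟩
  obtain ⟨α, hA, hB⟩ := hM.1.1.exists_forall_inl_eq_and_forall_inr_eq (fun v => 2 * π v)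
    (fun v => -(2 * π v))
  refine ⟨α, ?_, ?_, ?_, ?_, ?_, ?_⟩
  · rintro a b hE ⟨b', ha⟩ ⟨a', hb⟩
    rw [hA ⟨_, ha⟩, hB ⟨_, hb⟩]
    exact harc ⟨_, ha⟩ ⟨_, hb⟩ hE
  · intro a b hab
    rw [hA ⟨_, hab⟩, hB ⟨_, hab⟩, add_neg_cancel]
  · rintro a ⟨b, hab⟩
    obtain ⟨k, hk, hπ⟩ := hlevel ⟨_, hab⟩
    exact ⟨k, hk, by rw [hA ⟨_, hab⟩, hπ, mul_neg]⟩
  · rintro b ⟨a, hab⟩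
    obtain ⟨k, hk, hπ⟩ := hlevel ⟨_, hab⟩
    exact ⟨k, hk, by rw [hB ⟨_, hab⟩, hπ, mul_neg, neg_neg]⟩
  · rintro a ⟨b, hE, hb⟩
    obtain ⟨b', ha⟩ := (hM.1.matchedA_or_matchedB hE).resolve_right hb
    rw [hA ⟨_, ha⟩, hzero ⟨_, ha⟩ ⟨b, hE, hb⟩, mul_zero]
  · rintro b ⟨a, hE, ha⟩
    obtain ⟨a', hb⟩ := (hM.1.matchedA_or_matchedB hE).resolve_left ha
    rw [hB ⟨_, hb⟩, hlow ⟨_, hb⟩ ⟨a, hE, ha⟩, ← mul_neg, neg_sub]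

/-- Let `M` be a popular max-matching in `G`, `U` the set of nodes
unmatched in `M`, `A' = A ∖ U`, `B' = B ∖ U`, `n0 = |A'| = |B'|`, and `E'` the set of
edges with both endpoints matched in `M`. Then there is `α : A' ∪ B' → ℤ` with:
(a) `α_a + α_b ≥ wt_M(a,b)` on `E'`; (b) `α_a + α_b = 0` on `M`;
(c) `α_a ∈ {0, −2, …, −2(n0−1)}` on `A'` and `α_b ∈ {0, 2, …, 2(n0−1)}` on `B'`;
(i) `α_a = 0` for `a ∈ Nbr(U_B)`; (ii) `α_b = 2(n0−1)` for `b ∈ Nbr(U_A)`. -/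
theorem stmt13 {A B : Type*} [Fintype A] [Fintype B] [DecidableEq A] [DecidableEq B]
    (I : PrefSys A B) (hI : I.IsValid) (M : Finset (A × B))
    (hM : IsPopularMaxMatching I M) (n0 : ℕ)
    (hA' : (Finset.univ.filter (fun a : A => matchedA M a)).card = n0)
    (hB' : (Finset.univ.filter (fun b : B => matchedB M b)).card = n0) :
    ∃ α : A ⊕ B → ℤ,
      (∀ a b, I.E a b → matchedA M a → matchedB M b →
          wt I M a b ≤ α (Sum.inl a) + α (Sum.inr b)) ∧
      (∀ a b, (a, b) ∈ M → α (Sum.inl a) + α (Sum.inr b) = 0) ∧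
      (∀ a : A, matchedA M a → ∃ k : ℕ, k ≤ n0 - 1 ∧ α (Sum.inl a) = -(2 * (k : ℤ))) ∧
      (∀ b : B, matchedB M b → ∃ k : ℕ, k ≤ n0 - 1 ∧ α (Sum.inr b) = 2 * (k : ℤ)) ∧
      (∀ a : A, (∃ b, I.E a b ∧ ¬ matchedB M b) → α (Sum.inl a) = 0) ∧
      (∀ b : B, (∃ a, I.E a b ∧ ¬ matchedA M a) →
          α (Sum.inr b) = 2 * ((n0 : ℤ) - 1)) := by
  obtain rfl : M.card = n0 := hM.1.1.card_filter_matchedA.symm.trans hA'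
  exact stmt13_general I hI.isTournament M hM

end PopMax
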